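/- Let r ≥ 1 satisfy (3^k/(3^{k−1}+1))^r < 3, let l ≥ 1, and let J ∈ 𝒥_{l+1}. Then (1/|J|) ∫_J w_k^r dx = (1/3^{k−1}) Σ_{j=1}^∞ 3^{−j} (3^k/(3^{k−1}+1))^{(j+l)r}, where w_k(x) = Σ_{l=1}^∞ (3^k/(3^{k−1}+1))^l · χ_{Ω_l}(x). -/

import Mathlib

open MeasureTheory Set Filter Topology
open scoped ENNReal

noncomputable section

namespace RT

/-- The Hilbert transform `Hf(x)`, defined as the principal-value limit
`lim_{ε→0⁺} ∫_{|x-y|>ε} f(y)/(x-y) dy` (junk value at points where the limit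
does not exist). -/
def Hil (f : ℝ → ℝ) (x : ℝ) : ℝ :=
  limUnder (𝓝[>] (0 : ℝ)) fun ε => ∫ y in {y : ℝ | ε < |x - y|}, f y / (x - y)

/-- The (uncentered) Hardy–Littlewood maximal function over bounded intervals:
`Mf(x) = sup_{I ∋ x} (1/|I|) ∫_I |f|`. -/
def HLMax (f : ℝ → ℝ) (x : ℝ) : ℝ≥0∞ :=
  ⨆ (a : ℝ) (b : ℝ) (_ : a < b) (_ : x ∈ Icc a b),
    (ENNReal.ofReal (b - a))⁻¹ * ∫⁻ y in Ioo a b, ENNReal.ofReal |f y|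

/-- `M_r f = (M(|f|^r))^{1/r}`. -/
def Mr (r : ℝ) (f : ℝ → ℝ) (x : ℝ) : ℝ≥0∞ :=
  HLMax (fun y => |f y| ^ r) x ^ (1 / r)

/-- The Orlicz maximal operator
`M_Φ f(x) = sup_{I ∋ x} inf {λ > 0 : (1/|I|) ∫_I Φ(|f|/λ) ≤ 1}`. -/
def MOrlicz (Φ : ℝ → ℝ) (f : ℝ → ℝ) (x : ℝ) : ℝ≥0∞ :=
  ⨆ (a : ℝ) (b : ℝ) (_ : a < b) (_ : x ∈ Icc a b),
    sInf {lam : ℝ≥0∞ | ∃ l : ℝ, 0 < l ∧ lam = ENNReal.ofReal l ∧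
      (∫⁻ y in Ioo a b, ENNReal.ofReal (Φ (|f y| / l))) ≤ ENNReal.ofReal (b - a)}

/-- The centered maximal operator with respect to a weight `v`:
`M^c_v h(x) = sup_{ρ>0} (1/v(B(x,ρ))) ∫_{B(x,ρ)} |h| v`. -/
def Mc (v h : ℝ → ℝ) (x : ℝ) : ℝ≥0∞ :=
  ⨆ (ρ : ℝ) (_ : 0 < ρ),
    (∫⁻ y in Ioo (x - ρ) (x + ρ), ENNReal.ofReal (v y))⁻¹ *
      ∫⁻ y in Ioo (x - ρ) (x + ρ), ENNReal.ofReal |h y| * ENNReal.ofReal (v y)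

/-- A Young function: convex, increasing, `Φ(0) = 0`, `Φ(t)/t → ∞`. -/
structure IsYoung (Φ : ℝ → ℝ) : Prop where
  convexOn : ConvexOn ℝ (Ici 0) Φ
  mono : MonotoneOn Φ (Ici 0)
  map_zero : Φ 0 = 0
  superlinear : Tendsto (fun t => Φ t / t) atTop atTop

/-- A weight: a nonnegative locally integrable function on `ℝ`. -/
def IsWeight (w : ℝ → ℝ) : Prop :=
  (∀ x, 0 ≤ w x) ∧ LocallyIntegrable w volume

/-! Triadic machinery: intervals are represented by their endpoint pairs,
`(a, b)` corresponding to `[a, b)`. -/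

/-- The length of the interval. -/
def len (I : ℝ × ℝ) : ℝ := I.2 - I.1

/-- The set `[a, b)` of the interval `I = (a, b)`. -/
def ivl (I : ℝ × ℝ) : Set ℝ := Ico I.1 I.2

/-- A triadic interval `[3^j n, 3^j (n+1))`, `j, n ∈ ℤ`. -/
def IsTriadic (I : ℝ × ℝ) : Prop :=
  ∃ j n : ℤ, I.1 = (3 : ℝ) ^ j * n ∧ I.2 = (3 : ℝ) ^ j * (n + 1)

/-- The middle third `I^Δ` of `I`: same center, one third of the length. -/
def mid (I : ℝ × ℝ) : ℝ × ℝ := (I.1 + (I.2 - I.1) / 3, I.2 - (I.2 - I.1) / 3)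

/-- `P` assigns to each triadic interval `J ⊆ [0,1)` a triadic interval
adjacent to `J^Δ` (on its left or on its right) with `|P J| = 3^{-k} |J|`. -/
def GoodP (k : ℕ) (P : ℝ × ℝ → ℝ × ℝ) : Prop :=
  ∀ J : ℝ × ℝ, IsTriadic J → ivl J ⊆ Ico (0 : ℝ) 1 →
    IsTriadic (P J) ∧ len (P J) = len J / 3 ^ k ∧
      ((P J).2 = (mid J).1 ∨ (P J).1 = (mid J).2)

/-- The families `𝒥_l`: `𝒥_1 = {[0,1)}`, and `𝒥_{l+1}` consists of the `3^{k-1}`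
triadic subintervals of `J^Δ` of length `|J|/3^k`, for each `J ∈ 𝒥_l`.
(`𝒥_0` is empty.) -/
def Jfam (k : ℕ) : ℕ → Set (ℝ × ℝ)
  | 0 => ∅
  | 1 => {((0 : ℝ), (1 : ℝ))}
  | l + 2 => {J' | IsTriadic J' ∧ ∃ J ∈ Jfam k (l + 1),
      len J' = len J / 3 ^ k ∧ ivl J' ⊆ ivl (mid J)}

/-- The families `ℐ_l = {P J : J ∈ 𝒥_l}`. -/
def Ifam (k : ℕ) (P : ℝ × ℝ → ℝ × ℝ) (l : ℕ) : Set (ℝ × ℝ) :=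
  P '' Jfam k l

/-- `Ω_l = ⋃_{I ∈ ℐ_l} I`. -/
def Omega (k : ℕ) (P : ℝ × ℝ → ℝ × ℝ) (l : ℕ) : Set ℝ :=
  ⋃ I ∈ Ifam k P l, ivl I

/-- The constant `3^k / (3^{k-1} + 1)`. -/
def alpha (k : ℕ) : ℝ := 3 ^ k / (3 ^ (k - 1) + 1)

/-- The Reguera–Thiele weight
`w_k = ∑_{l=1}^∞ (3^k/(3^{k-1}+1))^l χ_{Ω_l}`. -/
def wk (k : ℕ) (P : ℝ × ℝ → ℝ × ℝ) (x : ℝ) : ℝ :=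
  ∑' l : ℕ, alpha k ^ (l + 1) * (Omega k P (l + 1)).indicator (fun _ => (1 : ℝ)) x

/-!
An interval `J ∈ 𝒥_{l+1}` meets no `Ω_m` with `m ≤ l`, since `Ω_m` avoids the middle thirds of the
intervals of `𝒥_m`. Inside `J` the set `Ω_{l+1}` is `P J`, which has measure `3^{-k} |J|`, and each
further generation retains one third of the measure, because the children of `J` tile the middle
third of `J`; hence `|J ∩ Ω_{l+1+j}| = 3^{-(k+j)} |J|`. As the sets `Ω_m` are pairwise disjoint, the
power `w_k^r` may be taken termwise, and integrating term by term over `J` gives a geometric series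
of ratio `(3^k/(3^{k-1}+1))^r / 3 < 1`.
-/

section General

variable {ι α E M N : Type*}

lemma apply_tsum_indicator_of_pairwise_disjoint [AddCommMonoid M] [TopologicalSpace M]
    [AddCommMonoid N] [TopologicalSpace N] {s : ι → Set α}
    (hs : Pairwise (Function.onFun Disjoint s)) {f : M → N} (hf : f 0 = 0) (g : ι → α → M) (x : α) :
    f (∑' i, (s i).indicator (g i) x) = ∑' i, (s i).indicator (fun y => f (g i y)) x := by
  by_cases h : ∃ i, x ∈ s i
  · obtain ⟨i, hi⟩ := h
    have hne : ∀ j ≠ i, x ∉ s j := fun j hj hxj => disjoint_left.1 (hs hj) hxj hi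
    rw [tsum_eq_single i fun j hj => indicator_of_notMem (hne j hj) _,
      tsum_eq_single i fun j hj => indicator_of_notMem (hne j hj) _,
      indicator_of_mem hi, indicator_of_mem hi]
  · push Not at h
    simp only [indicator_of_notMem (h _), tsum_zero, hf]

lemma measure_biUnion_inter_eq_mul [MeasurableSpace α] {μ : Measure α} {𝒞 : Set ι} {s : ι → Set α}
    {A : Set α} {c : ℝ≥0∞} (h𝒞 : 𝒞.Countable) (hdisj : 𝒞.PairwiseDisjoint s)
    (hmeas : ∀ i ∈ 𝒞, MeasurableSet (s i)) (h : ∀ i ∈ 𝒞, μ (s i ∩ A) = c * μ (s i)) :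
    μ ((⋃ i ∈ 𝒞, s i) ∩ A) = c * μ (⋃ i ∈ 𝒞, s i) := by
  rw [← Measure.restrict_apply (.biUnion h𝒞 hmeas), measure_biUnion h𝒞 hdisj hmeas,
    measure_biUnion h𝒞 hdisj hmeas, ← ENNReal.tsum_mul_left]
  exact tsum_congr fun i => by rw [Measure.restrict_apply (hmeas i i.2), h i i.2]

lemma hasSum_integral_tsum_indicator_const [Countable ι] [MeasurableSpace α] {μ : Measure α}
    [NormedAddCommGroup E] [NormedSpace ℝ E] [CompleteSpace E] {s : ι → Set α} {c : ι → E}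
    (hs : ∀ i, MeasurableSet (s i)) (hμs : ∀ i, μ (s i) ≠ ∞)
    (hsum : Summable fun i => μ.real (s i) * ‖c i‖) :
    HasSum (fun i => μ.real (s i) • c i) (∫ x, ∑' i, (s i).indicator (fun _ => c i) x ∂μ) := by
  have hintegrable : ∀ i, Integrable ((s i).indicator fun _ => c i) μ := fun i =>
    (integrable_indicator_iff (hs i)).2 (integrableOn_const (hμs i))
  have hnorm : Summable fun i => ∫ x, ‖(s i).indicator (fun _ => c i) x‖ ∂μ := by
    simpa only [norm_indicator_eq_indicator_norm, integral_indicator_const _ (hs _),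
      smul_eq_mul] using hsum
  simpa only [integral_indicator_const _ (hs _)] using
    hasSum_integral_of_summable_integral_norm hintegrable hnorm

lemma summable_pow_mul_rpow {a b r : ℝ} (ha : 0 ≤ a) (hb : 0 ≤ b) (hab : b * a ^ r < 1) (l : ℕ) :
    Summable fun j : ℕ => b ^ (j + 1) * a ^ (((j + 1 + l : ℕ) : ℝ) * r) := by
  have hgeom : Summable fun j : ℕ => (b * a ^ r) ^ j :=
    summable_geometric_of_lt_one (by positivity) hab
  refine (hgeom.mul_left (b * (a ^ r) ^ (1 + l))).congr fun j => ?_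
  rw [mul_comm _ r, Real.rpow_mul ha, Real.rpow_natCast]
  ring

end General

section Triadic

variable {I J : ℝ × ℝ} {x : ℝ}

/-- The triadic interval `[3^j n, 3^j (n+1))`, as a pair of endpoints. -/
def triadic (j n : ℤ) : ℝ × ℝ := ((3 : ℝ) ^ j * n, (3 : ℝ) ^ j * (n + 1))

lemma isTriadic_iff : IsTriadic I ↔ ∃ j n : ℤ, I = triadic j n := by
  simp only [IsTriadic, triadic, Prod.ext_iff]

lemma len_triadic (j n : ℤ) : len (triadic j n) = 3 ^ j := by
  simp only [len, triadic]
  ring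

lemma mem_ivl_triadic {j n : ℤ} : x ∈ ivl (triadic j n) ↔ ⌊x / 3 ^ j⌋ = n := by
  have h : (0 : ℝ) < 3 ^ j := by positivity
  simp only [ivl, triadic, mem_Ico, Int.floor_eq_iff, le_div_iff₀' h, div_lt_iff₀' h]

lemma mid_triadic (j n : ℤ) : mid (triadic j n) = triadic (j - 1) (3 * n + 1) := by
  have h : (3 : ℝ) ^ j = 3 ^ (j - 1) * 3 := by rw [← zpow_add_one₀ (by norm_num), sub_add_cancel]
  ext <;> simp only [mid, triadic, h] <;> push_cast <;> ring

lemma ivl_triadic_subset_of_mem {i j m n : ℤ} (hij : i ≤ j) (hm : x ∈ ivl (triadic i m))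
    (hn : x ∈ ivl (triadic j n)) : ivl (triadic i m) ⊆ ivl (triadic j n) := by
  obtain ⟨d, rfl⟩ := Int.le.dest hij
  have floor_coarse (z : ℝ) : ⌊z / 3 ^ (i + d)⌋ = ⌊z / 3 ^ i⌋ / (3 ^ d : ℕ) := by
    rw [← Int.floor_div_natCast, zpow_add₀ (by norm_num), zpow_natCast, div_div]
    push_cast
    rfl
  intro y hy
  rw [mem_ivl_triadic] at hm hn hy ⊢
  rw [floor_coarse, hy, ← hm, ← floor_coarse, hn]

lemma volume_ivl (I : ℝ × ℝ) : volume (ivl I) = ENNReal.ofReal (len I) := Real.volume_Ico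

lemma measurableSet_ivl (I : ℝ × ℝ) : MeasurableSet (ivl I) := measurableSet_Ico

lemma len_mid (I : ℝ × ℝ) : len (mid I) = len I / 3 := by
  simp only [len, mid]
  ring

lemma ivl_mid_subset (hI : 0 ≤ len I) : ivl (mid I) ⊆ ivl I := by
  rw [len] at hI
  apply Ico_subset_Ico <;> simp only [mid] <;> linarith

lemma countable_setOf_isTriadic : {I | IsTriadic I}.Countable :=
  (countable_range fun p : ℤ × ℤ => triadic p.1 p.2).mono fun I hI => by
    obtain ⟨j, n, rfl⟩ := isTriadic_iff.1 hI
    exact ⟨(j, n), rfl⟩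

namespace IsTriadic

protected lemma len_pos (hI : IsTriadic I) : 0 < len I := by
  obtain ⟨j, n, rfl⟩ := isTriadic_iff.1 hI
  rw [len_triadic]
  positivity

protected lemma mid (hI : IsTriadic I) : IsTriadic (mid I) := by
  obtain ⟨j, n, rfl⟩ := isTriadic_iff.1 hI
  exact isTriadic_iff.2 ⟨j - 1, 3 * n + 1, mid_triadic j n⟩

lemma subset_of_mem (hI : IsTriadic I) (hJ : IsTriadic J) (hlen : len I ≤ len J)
    (hxI : x ∈ ivl I) (hxJ : x ∈ ivl J) : ivl I ⊆ ivl J := by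
  obtain ⟨i, m, rfl⟩ := isTriadic_iff.1 hI
  obtain ⟨j, n, rfl⟩ := isTriadic_iff.1 hJ
  rw [len_triadic, len_triadic, zpow_le_zpow_iff_right₀ (by norm_num)] at hlen
  exact ivl_triadic_subset_of_mem hlen hxI hxJ

lemma eq_of_mem (hI : IsTriadic I) (hJ : IsTriadic J) (hlen : len I = len J)
    (hxI : x ∈ ivl I) (hxJ : x ∈ ivl J) : I = J := by
  obtain ⟨i, m, rfl⟩ := isTriadic_iff.1 hI
  obtain ⟨j, n, rfl⟩ := isTriadic_iff.1 hJ
  rw [len_triadic, len_triadic, zpow_right_inj₀ (by norm_num) (by norm_num)] at hlen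
  subst hlen
  rw [← mem_ivl_triadic.1 hxI, ← mem_ivl_triadic.1 hxJ]

lemma exists_len_eq_div (hJ : IsTriadic J) (k : ℕ) (x : ℝ) :
    ∃ I, IsTriadic I ∧ len I = len J / 3 ^ k ∧ x ∈ ivl I := by
  obtain ⟨j, n, rfl⟩ := isTriadic_iff.1 hJ
  refine ⟨triadic (j - k) ⌊x / 3 ^ (j - k)⌋, isTriadic_iff.2 ⟨_, _, rfl⟩, ?_,
    mem_ivl_triadic.2 rfl⟩
  rw [len_triadic, len_triadic, zpow_sub₀ (by norm_num), zpow_natCast]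

end IsTriadic

end Triadic

section Families

variable {k l m : ℕ} {P : ℝ × ℝ → ℝ × ℝ} {J J' : ℝ × ℝ} {x : ℝ}

/-- The triadic subintervals of the middle third of `J` of length `|J|/3^k`; these are the intervals
that `J ∈ 𝒥_l` contributes to `𝒥_{l+1}`. -/
def children (k : ℕ) (J : ℝ × ℝ) : Set (ℝ × ℝ) :=
  {J' | IsTriadic J' ∧ len J' = len J / 3 ^ k ∧ ivl J' ⊆ ivl (mid J)}

lemma countable_children (k : ℕ) (J : ℝ × ℝ) : (children k J).Countable :=
  countable_setOf_isTriadic.mono fun _ hJ' => hJ'.1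

lemma pairwiseDisjoint_children (k : ℕ) (J : ℝ × ℝ) : (children k J).PairwiseDisjoint ivl := by
  rintro I ⟨hI, hlenI, -⟩ I' ⟨hI', hlenI', -⟩ hne
  exact disjoint_left.2 fun x hx hx' => hne (hI.eq_of_mem hI' (hlenI.trans hlenI'.symm) hx hx')

lemma len_div_three_pow_le (hk : k ≠ 0) (hJ : 0 ≤ len J) : len J / 3 ^ k ≤ len J / 3 := by
  gcongr
  exact le_self_pow₀ (by norm_num) hk

lemma biUnion_children (hk : k ≠ 0) (hJ : IsTriadic J) :
    ⋃ J' ∈ children k J, ivl J' = ivl (mid J) := by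
  refine Subset.antisymm (iUnion₂_subset fun J' hJ' => hJ'.2.2) fun x hx => ?_
  obtain ⟨I, hI, hlen, hxI⟩ := hJ.exists_len_eq_div k x
  have hle : len I ≤ len (mid J) := by
    rw [hlen, len_mid]
    exact len_div_three_pow_le hk hJ.len_pos.le
  exact mem_iUnion₂.2 ⟨I, ⟨hI, hlen, hI.subset_of_mem hJ.mid hle hxI hx⟩, hxI⟩

lemma mem_Jfam_add_two : J' ∈ Jfam k (m + 2) ↔ ∃ J ∈ Jfam k (m + 1), J' ∈ children k J := by
  simp only [Jfam, children, mem_ofPred_eq]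
  tauto

lemma isTriadic_of_mem_Jfam (hJ : J ∈ Jfam k m) : IsTriadic J := by
  match m, hJ with
  | 1, hJ =>
    obtain rfl : J = (0, 1) := hJ
    exact ⟨0, 0, by simp, by simp⟩
  | _ + 2, hJ => exact hJ.1

lemma len_of_mem_Jfam (hJ : J ∈ Jfam k (m + 1)) : len J = (1 / 3 ^ k) ^ m := by
  induction m generalizing J with
  | zero =>
    obtain rfl : J = (0, 1) := hJ
    simp [len]
  | succ m ih =>
    obtain ⟨J₀, hJ₀, -, hlen, -⟩ := mem_Jfam_add_two.1 hJ
    rw [hlen, ih hJ₀, pow_succ, mul_one_div]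

lemma ivl_subset_of_mem_Jfam (hJ : J ∈ Jfam k (m + 1)) : ivl J ⊆ Ico 0 1 := by
  induction m generalizing J with
  | zero =>
    obtain rfl : J = (0, 1) := hJ
    exact subset_rfl
  | succ m ih =>
    obtain ⟨J₀, hJ₀, -, -, hsub⟩ := mem_Jfam_add_two.1 hJ
    exact hsub.trans ((ivl_mid_subset (isTriadic_of_mem_Jfam hJ₀).len_pos.le).trans (ih hJ₀))

lemma Jfam_eq_of_mem (hJ : J ∈ Jfam k (m + 1)) (hJ' : J' ∈ Jfam k (m + 1)) (hx : x ∈ ivl J)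
    (hx' : x ∈ ivl J') : J = J' :=
  (isTriadic_of_mem_Jfam hJ).eq_of_mem (isTriadic_of_mem_Jfam hJ')
    ((len_of_mem_Jfam hJ).trans (len_of_mem_Jfam hJ').symm) hx hx'

/-- The union of the intervals of `𝒥_m`. -/
def Jcover (k m : ℕ) : Set ℝ := ⋃ J ∈ Jfam k m, ivl J

lemma mem_Jcover : x ∈ Jcover k m ↔ ∃ J ∈ Jfam k m, x ∈ ivl J := by
  simp only [Jcover, mem_iUnion, exists_prop]

lemma exists_mem_ivl_mid_of_mem_Jcover (hx : x ∈ Jcover k (m + 2)) :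
    ∃ J ∈ Jfam k (m + 1), x ∈ ivl (mid J) := by
  obtain ⟨J', hJ', hx⟩ := mem_Jcover.1 hx
  obtain ⟨J, hJ, -, -, hsub⟩ := mem_Jfam_add_two.1 hJ'
  exact ⟨J, hJ, hsub hx⟩

lemma antitone_Jcover (k : ℕ) : Antitone fun m => Jcover k (m + 1) :=
  antitone_nat_of_succ_le fun m x hx => by
    obtain ⟨J, hJ, hx⟩ := exists_mem_ivl_mid_of_mem_Jcover hx
    exact mem_Jcover.2 ⟨J, hJ, ivl_mid_subset (isTriadic_of_mem_Jfam hJ).len_pos.le hx⟩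

lemma ivl_inter_Jcover_subset_mid (hJ : J ∈ Jfam k (m + 1)) :
    ivl J ∩ Jcover k (m + 2) ⊆ ivl (mid J) := by
  rintro x ⟨hxJ, hx⟩
  obtain ⟨J₀, hJ₀, hx⟩ := exists_mem_ivl_mid_of_mem_Jcover hx
  have hxJ₀ : x ∈ ivl J₀ := ivl_mid_subset (isTriadic_of_mem_Jfam hJ₀).len_pos.le hx
  rwa [Jfam_eq_of_mem hJ hJ₀ hxJ hxJ₀]

lemma GoodP.len_apply (hP : GoodP k P) (hJ : J ∈ Jfam k (m + 1)) : len (P J) = len J / 3 ^ k :=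
  (hP J (isTriadic_of_mem_Jfam hJ) (ivl_subset_of_mem_Jfam hJ)).2.1

lemma GoodP.adjacent (hP : GoodP k P) (hJ : J ∈ Jfam k (m + 1)) :
    (P J).2 = (mid J).1 ∨ (P J).1 = (mid J).2 :=
  (hP J (isTriadic_of_mem_Jfam hJ) (ivl_subset_of_mem_Jfam hJ)).2.2

lemma GoodP.ivl_subset (hk : k ≠ 0) (hP : GoodP k P) (hJ : J ∈ Jfam k (m + 1)) :
    ivl (P J) ⊆ ivl J := by
  have hpos := (isTriadic_of_mem_Jfam hJ).len_pos
  have hle : len (P J) ≤ len J / 3 := by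
    rw [hP.len_apply hJ]
    exact len_div_three_pow_le hk hpos.le
  have hadj := hP.adjacent hJ
  simp only [len, mid] at hpos hle hadj
  apply Ico_subset_Ico <;> rcases hadj with h | h <;> linarith

lemma GoodP.disjoint_mid (hP : GoodP k P) (hJ : J ∈ Jfam k (m + 1)) :
    Disjoint (ivl (P J)) (ivl (mid J)) := by
  refine disjoint_left.2 fun x hx hx' => ?_
  rcases hP.adjacent hJ with h | h
  · exact (hx.2.trans_eq h).not_ge hx'.1
  · exact (hx'.2.trans_eq h.symm).not_ge hx.1

lemma mem_Omega : x ∈ Omega k P m ↔ ∃ J ∈ Jfam k m, x ∈ ivl (P J) := by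
  simp only [Omega, Ifam, mem_iUnion, exists_prop, exists_mem_image]

lemma measurableSet_Omega (k : ℕ) (P : ℝ × ℝ → ℝ × ℝ) (m : ℕ) : MeasurableSet (Omega k P m) :=
  have hcountable : (Jfam k m).Countable :=
    countable_setOf_isTriadic.mono fun _ hJ => isTriadic_of_mem_Jfam hJ
  .biUnion (hcountable.image P) fun I _ => measurableSet_ivl I

lemma Omega_subset_Jcover (hk : k ≠ 0) (hP : GoodP k P) (m : ℕ) :
    Omega k P (m + 1) ⊆ Jcover k (m + 1) := fun x hx => by
  obtain ⟨J, hJ, hx⟩ := mem_Omega.1 hx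
  exact mem_Jcover.2 ⟨J, hJ, hP.ivl_subset hk hJ hx⟩

lemma ivl_inter_Omega (hk : k ≠ 0) (hP : GoodP k P) (hJ : J ∈ Jfam k (m + 1)) :
    ivl J ∩ Omega k P (m + 1) = ivl (P J) := by
  refine Subset.antisymm ?_ fun x hx => ⟨hP.ivl_subset hk hJ hx, mem_Omega.2 ⟨J, hJ, hx⟩⟩
  rintro x ⟨hxJ, hx⟩
  obtain ⟨J', hJ', hx⟩ := mem_Omega.1 hx
  rwa [Jfam_eq_of_mem hJ hJ' hxJ (hP.ivl_subset hk hJ' hx)]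

lemma disjoint_Omega_Jcover (hk : k ≠ 0) (hP : GoodP k P) (h : m < l) :
    Disjoint (Omega k P (m + 1)) (Jcover k (l + 1)) := by
  rw [disjoint_left]
  intro x hx hx'
  obtain ⟨J, hJ, hxP⟩ := mem_Omega.1 hx
  have hxcover : x ∈ Jcover k (m + 2) := antitone_Jcover k h hx'
  have hxmid : x ∈ ivl (mid J) :=
    ivl_inter_Jcover_subset_mid hJ ⟨hP.ivl_subset hk hJ hxP, hxcover⟩
  exact disjoint_left.1 (hP.disjoint_mid hJ) hxP hxmid

lemma pairwise_disjoint_Omega (hk : k ≠ 0) (hP : GoodP k P) :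
    Pairwise (Function.onFun Disjoint fun m => Omega k P (m + 1)) :=
  (pairwise_disjoint_on _).2 fun _ l h =>
    (disjoint_Omega_Jcover hk hP h).mono_right (Omega_subset_Jcover hk hP l)

lemma ivl_inter_Omega_eq_mid_inter (hk : k ≠ 0) (hP : GoodP k P) (hJ : J ∈ Jfam k (m + 1))
    (h : m < l) : ivl J ∩ Omega k P (l + 1) = ivl (mid J) ∩ Omega k P (l + 1) := by
  have hcover : Omega k P (l + 1) ⊆ Jcover k (m + 2) :=
    (Omega_subset_Jcover hk hP l).trans (antitone_Jcover k h)
  refine Subset.antisymm (fun x hx => ⟨?_, hx.2⟩)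
    (inter_subset_inter_left _ (ivl_mid_subset (isTriadic_of_mem_Jfam hJ).len_pos.le))
  exact ivl_inter_Jcover_subset_mid hJ ⟨hx.1, hcover hx.2⟩

end Families

section Weight

variable {k l : ℕ} {P : ℝ × ℝ → ℝ × ℝ} {J : ℝ × ℝ} {r x : ℝ}

lemma volume_ivl_inter_Omega (hk : k ≠ 0) (hP : GoodP k P) (j : ℕ) (hJ : J ∈ Jfam k (l + 1)) :
    volume (ivl J ∩ Omega k P (j + 1 + l)) =
      ENNReal.ofReal ((1 / 3) ^ (k + j)) * volume (ivl J) := by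
  induction j generalizing l J with
  | zero =>
    rw [zero_add, add_comm 1 l, ivl_inter_Omega hk hP hJ, volume_ivl, volume_ivl, hP.len_apply hJ,
      ← ENNReal.ofReal_mul (by positivity), add_zero, one_div_pow, one_div_mul_eq_div]
  | succ j ih =>
    have hJtri := isTriadic_of_mem_Jfam hJ
    have hchild : ∀ J' ∈ children k J, volume (ivl J' ∩ Omega k P (j + 1 + (l + 1))) =
        ENNReal.ofReal ((1 / 3) ^ (k + j)) * volume (ivl J') := fun J' hJ' =>
      ih (mem_Jfam_add_two.2 ⟨J, hJ, hJ'⟩)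
    have hmid : ivl J ∩ Omega k P (j + 1 + (l + 1)) = ivl (mid J) ∩ Omega k P (j + 1 + (l + 1)) :=
      ivl_inter_Omega_eq_mid_inter (l := j + 1 + l) hk hP hJ (by omega)
    rw [add_assoc (j + 1), add_comm 1 l, hmid,
      ← biUnion_children hk hJtri, measure_biUnion_inter_eq_mul (countable_children k J)
        (pairwiseDisjoint_children k J) (fun J' _ => measurableSet_ivl J') hchild,
      biUnion_children hk hJtri, volume_ivl, volume_ivl, len_mid,
      ← ENNReal.ofReal_mul (by positivity), ← ENNReal.ofReal_mul (by positivity)]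
    congr 1
    ring

lemma volume_real_restrict_ivl_Omega (hk : k ≠ 0) (hP : GoodP k P) (j : ℕ)
    (hJ : J ∈ Jfam k (l + 1)) :
    (volume.restrict (ivl J)).real (Omega k P (j + 1 + l)) = (1 / 3) ^ (k + j) * len J := by
  have hpos := (isTriadic_of_mem_Jfam hJ).len_pos
  rw [measureReal_restrict_apply (measurableSet_Omega k P _), inter_comm, measureReal_def,
    volume_ivl_inter_Omega hk hP j hJ, volume_ivl, ← ENNReal.ofReal_mul (by positivity),
    ENNReal.toReal_ofReal (by positivity)]

lemma alpha_nonneg (k : ℕ) : 0 ≤ alpha k := by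
  unfold alpha
  positivity

lemma wk_rpow (hk : k ≠ 0) (hP : GoodP k P) (hr : r ≠ 0) (x : ℝ) :
    wk k P x ^ r = ∑' m : ℕ,
      (Omega k P (m + 1)).indicator (fun _ => alpha k ^ (((m + 1 : ℕ) : ℝ) * r)) x := by
  have hterm (m : ℕ) : alpha k ^ (m + 1) * (Omega k P (m + 1)).indicator (fun _ => (1 : ℝ)) x =
      (Omega k P (m + 1)).indicator (fun _ => alpha k ^ (m + 1)) x := by
    rw [← indicator_const_mul, mul_one]
  simp only [wk, hterm]
  rw [apply_tsum_indicator_of_pairwise_disjoint (pairwise_disjoint_Omega hk hP)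
    (f := fun t : ℝ => t ^ r) (Real.zero_rpow hr)]
  simp only [Real.rpow_mul (alpha_nonneg k), Real.rpow_natCast]

lemma wk_rpow_of_mem_ivl (hk : k ≠ 0) (hP : GoodP k P) (hr : r ≠ 0) (hJ : J ∈ Jfam k (l + 1))
    (hx : x ∈ ivl J) :
    wk k P x ^ r = ∑' j : ℕ,
      (Omega k P (j + 1 + l)).indicator (fun _ => alpha k ^ (((j + 1 + l : ℕ) : ℝ) * r)) x := by
  have hsupp : (Function.support fun m : ℕ => (Omega k P (m + 1)).indicator
      (fun _ => alpha k ^ (((m + 1 : ℕ) : ℝ) * r)) x) ⊆ range (· + l) := fun m hm => by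
    have hxm : x ∈ Omega k P (m + 1) := mem_of_indicator_ne_zero hm
    have hlm : l ≤ m := not_lt.1 fun hml =>
      disjoint_left.1 (disjoint_Omega_Jcover hk hP hml) hxm (mem_Jcover.2 ⟨J, hJ, hx⟩)
    exact ⟨m - l, Nat.sub_add_cancel hlm⟩
  rw [wk_rpow hk hP hr, ← (add_left_injective l).tsum_eq hsupp]
  simp only [Nat.add_right_comm]

lemma hasSum_setIntegral_wk_rpow (hk : k ≠ 0) (hP : GoodP k P) (hr : r ≠ 0)
    (hr3 : alpha k ^ r < 3) (hJ : J ∈ Jfam k (l + 1)) :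
    HasSum (fun j : ℕ => (1 / 3) ^ (k + j) * len J * alpha k ^ (((j + 1 + l : ℕ) : ℝ) * r))
      (∫ x in ivl J, wk k P x ^ r) := by
  have hα := alpha_nonneg k
  have hfin : IsFiniteMeasure (volume.restrict (ivl J)) :=
    isFiniteMeasure_restrict.2 measure_Ico_lt_top.ne
  have hgeom : Summable fun j : ℕ =>
      (1 / 3 : ℝ) ^ (k + j) * len J * ‖alpha k ^ (((j + 1 + l : ℕ) : ℝ) * r)‖ := by
    refine ((summable_pow_mul_rpow (b := 1 / 3) (r := r) hα (by norm_num) (by linarith) l).mul_left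
      (3 * (1 / 3) ^ k * len J)).congr fun j => ?_
    rw [Real.norm_of_nonneg (by positivity)]
    ring
  rw [setIntegral_congr_fun (measurableSet_ivl J) fun x hx => wk_rpow_of_mem_ivl hk hP hr hJ hx]
  simp only [← volume_real_restrict_ivl_Omega hk hP _ hJ, ← smul_eq_mul] at hgeom ⊢
  exact hasSum_integral_tsum_indicator_const (fun j => measurableSet_Omega k P _)
    (fun j => measure_ne_top _ _) hgeom

end Weight

theorem statement5_general {k : ℕ} (hk : k ≠ 0) {P : ℝ × ℝ → ℝ × ℝ} (hP : GoodP k P)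
    {r : ℝ} (hr : 0 < r) (hr3 : alpha k ^ r < 3) {l : ℕ} {J : ℝ × ℝ} (hJ : J ∈ Jfam k (l + 1)) :
    (len J)⁻¹ * ∫ x in ivl J, wk k P x ^ r
      = (1 / (3:ℝ) ^ (k - 1)) *
        ∑' j : ℕ, ((1:ℝ) / 3) ^ (j + 1) *
          alpha k ^ ((((j + 1 + l : ℕ) : ℝ)) * r) := by
  have hlen : len J ≠ 0 := (isTriadic_of_mem_Jfam hJ).len_pos.ne'
  rw [← (hasSum_setIntegral_wk_rpow hk hP hr.ne' hr3 hJ).tsum_eq, ← tsum_mul_left, ← tsum_mul_left]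
  refine tsum_congr fun j => ?_
  have hpow : (1 / 3 : ℝ) ^ (k + j) = 1 / 3 ^ (k - 1) * (1 / 3) ^ (j + 1) := by
    rw [← one_div_pow, ← pow_add]
    congr 1
    omega
  rw [hpow]
  field_simp

/-- For `r ≥ 1` with `(3^k/(3^{k-1}+1))^r < 3`, `l ≥ 1`, and
`J ∈ 𝒥_{l+1}`, one has
`(1/|J|) ∫_J w_k^r = (1/3^{k-1}) ∑_{j=1}^∞ 3^{-j} (3^k/(3^{k-1}+1))^{(j+l) r}`. -/
theorem statement5 (k : ℕ) (hk : 2 ≤ k) (P : ℝ × ℝ → ℝ × ℝ) (hP : GoodP k P)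
    (r : ℝ) (hr : 1 ≤ r) (hr3 : alpha k ^ r < 3)
    (l : ℕ) (hl : 1 ≤ l) (J : ℝ × ℝ) (hJ : J ∈ Jfam k (l + 1)) :
    (len J)⁻¹ * ∫ x in ivl J, wk k P x ^ r
      = (1 / (3:ℝ) ^ (k - 1)) *
        ∑' j : ℕ, ((1:ℝ) / 3) ^ (j + 1) *
          alpha k ^ ((((j + 1 + l : ℕ) : ℝ)) * r) :=
  statement5_general (Nat.ne_zero_of_lt hk) hP (zero_lt_one.trans_le hr) hr3 hJ

end RT

end
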